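/- Let C ⊆ 𝔽₂^n be a binary linear code, X uniform on C, and Y^ε the output of BEC(ε). Define the EXIT function g(ε) = (1/n)·∑_{i=1}^n H(X_i | Y^ε_{∼i}). Then g is differentiable on (0,1) with g'(ε) = (1/n)·∑_{i=1}^n ∑_{j≠i} I(X_i ; X_j | Y^ε_{∼i,j}). Moreover, if C is 1-transitive, then for every δ ∈ (0,1/2) and ε ∈ (0,1) with g(ε) ∈ (δ, 1−δ), g'(ε) ≥ (c(δ,ε)/n^{3/2})·∑_{i=1}^n ∑_{j≠i} α^ε_{ij}, where c(δ,ε) > 0 is bounded away from 0 when δ and ε are bounded away from 0 (and ε away from 1). -/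

import Mathlib

open scoped Classical
open Finset

noncomputable section

/-- Vectors in 𝔽₂^n (codewords and binary patterns). -/
abbrev Pattern (n : ℕ) := Fin n → ZMod 2

/-- Hamming weight. -/
def wH {n : ℕ} (x : Pattern n) : ℕ := hammingNorm x

/-- `z` covers `x` if the support of `x` is contained in the support of `z`. -/
def covers {n : ℕ} (z x : Pattern n) : Prop := ∀ k, x k ≠ 0 → z k ≠ 0

/-- Sample space: a codeword of C together with an erasure pattern (1 = erased). -/
abbrev Samp (n : ℕ) (C : Submodule (ZMod 2) (Pattern n)) := C × Pattern n

/-- Joint probability mass: X uniform on C, coordinates erased i.i.d. with prob. ε. -/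
def pmfP {n : ℕ} (C : Submodule (ZMod 2) (Pattern n)) (ε : ℝ) (ω : Samp n C) : ℝ :=
  (Nat.card C : ℝ)⁻¹ * ε ^ wH ω.2 * (1 - ε) ^ (n - wH ω.2)

/-- The BEC output Y: erased coordinates become `none`. -/
def Yout {n : ℕ} {C : Submodule (ZMod 2) (Pattern n)} (ω : Samp n C) :
    Fin n → Option (ZMod 2) :=
  fun k => if ω.2 k = 1 then none else some (ω.1.1 k)

/-- Y with coordinate i removed. -/
def Ynot {n : ℕ} {C : Submodule (ZMod 2) (Pattern n)} (i : Fin n) (ω : Samp n C) :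
    {k : Fin n // k ≠ i} → Option (ZMod 2) :=
  fun k => Yout ω k.1

/-- Y with coordinates i and j removed. -/
def Ynot2 {n : ℕ} {C : Submodule (ZMod 2) (Pattern n)} (i j : Fin n) (ω : Samp n C) :
    {k : Fin n // k ≠ i ∧ k ≠ j} → Option (ZMod 2) :=
  fun k => Yout ω k.1

/-- Probability of an event under a mass function p. -/
def prE {Ω : Type*} [Fintype Ω] (p : Ω → ℝ) (E : Set Ω) : ℝ :=
  ∑ ω ∈ univ.filter (· ∈ E), p ω

/-- Shannon entropy (in bits) of the random variable f under p. -/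
def entr {Ω A : Type*} [Fintype Ω] [Fintype A] (p : Ω → ℝ) (f : Ω → A) : ℝ :=
  -∑ a : A, prE p {ω | f ω = a} * Real.logb 2 (prE p {ω | f ω = a})

/-- Conditional Shannon entropy H(f | g) in bits. -/
def condEnt {Ω A B : Type*} [Fintype Ω] [Fintype A] [Fintype B]
    (p : Ω → ℝ) (f : Ω → A) (g : Ω → B) : ℝ :=
  -∑ a : A, ∑ b : B,
    prE p {ω | f ω = a ∧ g ω = b} *
      Real.logb 2 (prE p {ω | f ω = a ∧ g ω = b} / prE p {ω | g ω = b})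

/-- Mutual information I(f ; g) in bits. -/
def mutInf {Ω A B : Type*} [Fintype Ω] [Fintype A] [Fintype B]
    (p : Ω → ℝ) (f : Ω → A) (g : Ω → B) : ℝ :=
  entr p f - condEnt p f g

/-- Conditional mutual information I(f ; g | h) in bits. -/
def condMI {Ω A B D : Type*} [Fintype Ω] [Fintype A] [Fintype B] [Fintype D]
    (p : Ω → ℝ) (f : Ω → A) (g : Ω → B) (h : Ω → D) : ℝ :=
  condEnt p f h - condEnt p f (fun ω => (g ω, h ω))

/-- Pr(Z^ε ∈ B) for the random pattern Z^ε = Z^ε(ij) with Z^ε_i = Z^ε_j = 1 and the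
remaining coordinates i.i.d. Bernoulli(ε). -/
def probZ {n : ℕ} (ε : ℝ) (i j : Fin n) (B : Set (Pattern n)) : ℝ :=
  ∑ z ∈ univ.filter (fun z : Pattern n => z ∈ B ∧ z i = 1 ∧ z j = 1),
    ε ^ (univ.filter (fun k => k ≠ i ∧ k ≠ j ∧ z k = 1)).card *
      (1 - ε) ^ (univ.filter (fun k => k ≠ i ∧ k ≠ j ∧ z k = 0)).card

/-- C^{ij}_{ab}(z): codewords c ∈ C with (c_i, c_j) = (a, b) covered by z. -/
def Cab {n : ℕ} (C : Submodule (ZMod 2) (Pattern n)) (i j : Fin n) (a b : ZMod 2)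
    (z : Pattern n) : Set (Pattern n) :=
  {c | c ∈ C ∧ c i = a ∧ c j = b ∧ covers z c}

def B1 {n : ℕ} (C : Submodule (ZMod 2) (Pattern n)) (i j : Fin n) : Set (Pattern n) :=
  {z | Cab C i j 0 1 z = ∅ ∧ Cab C i j 1 0 z = ∅ ∧ Cab C i j 1 1 z = ∅}

def B2 {n : ℕ} (C : Submodule (ZMod 2) (Pattern n)) (i j : Fin n) : Set (Pattern n) :=
  {z | Cab C i j 0 1 z ≠ ∅ ∧ Cab C i j 1 0 z = ∅ ∧ Cab C i j 1 1 z = ∅}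

def B3 {n : ℕ} (C : Submodule (ZMod 2) (Pattern n)) (i j : Fin n) : Set (Pattern n) :=
  {z | Cab C i j 1 0 z ≠ ∅ ∧ Cab C i j 0 1 z = ∅ ∧ Cab C i j 1 1 z = ∅}

def B4 {n : ℕ} (C : Submodule (ZMod 2) (Pattern n)) (i j : Fin n) : Set (Pattern n) :=
  {z | Cab C i j 1 1 z ≠ ∅ ∧ Cab C i j 0 1 z = ∅ ∧ Cab C i j 1 0 z = ∅}

def B5 {n : ℕ} (C : Submodule (ZMod 2) (Pattern n)) (i j : Fin n) : Set (Pattern n) :=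
  {z | Cab C i j 0 1 z ≠ ∅ ∧ Cab C i j 1 0 z ≠ ∅ ∧ Cab C i j 1 1 z ≠ ∅}

/-- α^ε_{ij} = Pr(Z^ε ∈ B₄ | Z^ε ∈ B₂ ∪ B₃ ∪ B₄). -/
def alphaIJ {n : ℕ} (C : Submodule (ZMod 2) (Pattern n)) (ε : ℝ) (i j : Fin n) : ℝ :=
  probZ ε i j (B4 C i j) / probZ ε i j (B2 C i j ∪ B3 C i j ∪ B4 C i j)

/-- The EXIT function g(ε) = (1/n) ∑_i H(X_i | Y^ε_{∼i}). -/
def gEXIT {n : ℕ} (C : Submodule (ZMod 2) (Pattern n)) (ε : ℝ) : ℝ :=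
  (n : ℝ)⁻¹ * ∑ i : Fin n, condEnt (pmfP C ε) (fun ω => ω.1.1 i) (Ynot i)

/-- A code is 1-transitive if its permutation automorphism group acts transitively
on the coordinates. -/
def OneTransitive {n : ℕ} (C : Submodule (ZMod 2) (Pattern n)) : Prop :=
  ∀ i j : Fin n, ∃ π : Equiv.Perm (Fin n), π i = j ∧ ∀ x : Pattern n, x ∈ C ↔ x ∘ π ∈ C

/-!
Over an erasure channel a bit is either known or uniform, so `H(X_i | Y_{∼i})` is the probability
that the pattern of the erased coordinates leaves `X_i` undetermined. Russo's formula differentiates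
this probability; its `j`-th term is the probability that `X_i` is determined if `X_j` is known but
not otherwise, which is both `I(X_i ; X_j | Y_{∼i,j})` and `Pr(Z ∈ B₄)`.

For the lower bound it remains to bound `Pr(Z ∈ B₂ ∪ B₃ ∪ B₄)` from below. This set contains every
point outside `B₁` that a single coordinate flip moves into `B₁`: two codewords witnessing `z ∈ B₅`
and their sum cannot all be destroyed by one flip. So `B₂ ∪ B₃ ∪ B₄` separates `B₁` from `B₅`, and
transitivity bounds both the complement of `B₁` from below and `B₅` away from full measure. A
dimension-free Bobkov-type inequality with the profile `x (1 - x)`, proved by induction on the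
dimension, then makes the separator have measure at least of order `n^{-1/2}`.
-/

section Bits

lemma bit_ne_zero_iff {b : ZMod 2} : b ≠ 0 ↔ b = 1 := by revert b; decide

lemma bit_ne_one_iff {b : ZMod 2} : b ≠ 1 ↔ b = 0 := by revert b; decide

lemma sum_bit {M : Type*} [AddCommMonoid M] (F : ZMod 2 → M) : ∑ b, F b = F 0 + F 1 :=
  Fin.sum_univ_two F

end Bits

section Entropy

variable {Ω A B : Type*} [Fintype Ω] [Fintype A] [Fintype B] {p : Ω → ℝ}

lemma prE_pos_of_mem (hp : ∀ ω, 0 ≤ p ω) {E : Set Ω} {ω : Ω} (hω : ω ∈ E) (hpω : 0 < p ω) :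
    0 < prE p E :=
  sum_pos' (fun ω _ => hp ω) ⟨ω, by simpa using hω, hpω⟩

lemma prE_preimage_perm {σ : Equiv.Perm Ω} (hσ : ∀ ω, p (σ ω) = p ω) (E : Set Ω) :
    prE p (σ ⁻¹' E) = prE p E := by
  simp only [prE, sum_filter]
  rw [← Equiv.sum_comp σ fun ω => if ω ∈ E then p ω else 0]
  simp only [hσ, Set.mem_preimage]

lemma prE_eq_add_bit (f : Ω → ZMod 2) (E : Set Ω) (a : ZMod 2) :
    prE p E = prE p {ω | f ω = a ∧ ω ∈ E} + prE p {ω | f ω = a + 1 ∧ ω ∈ E} := by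
  have bit_cases (b : ZMod 2) : (b = a ∧ b ≠ a + 1) ∨ (b ≠ a ∧ b = a + 1) := by
    revert a b; decide
  simp only [prE, sum_filter, ← sum_add_distrib]
  refine sum_congr rfl fun ω _ => ?_
  rcases bit_cases (f ω) with ⟨h₁, h₂⟩ | ⟨h₁, h₂⟩ <;> simp [h₁, h₂]

lemma prE_eq_two_mul_of_perm_flips (f : Ω → ZMod 2) {E : Set Ω} {σ : Equiv.Perm Ω}
    (hp : ∀ ω, p (σ ω) = p ω) (hE : ∀ ω, σ ω ∈ E ↔ ω ∈ E)
    (hf : ∀ ω ∈ E, f (σ ω) = f ω + 1) (a : ZMod 2) :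
    prE p E = 2 * prE p {ω | f ω = a ∧ ω ∈ E} := by
  have hpre : σ ⁻¹' {ω | f ω = a + 1 ∧ ω ∈ E} = {ω | f ω = a ∧ ω ∈ E} := by
    ext ω
    simp only [Set.mem_preimage, Set.mem_ofPred_eq, hE]
    exact and_congr_left fun hω => by rw [hf ω hω, add_left_inj]
  rw [prE_eq_add_bit f E a, ← prE_preimage_perm hp {ω | f ω = a + 1 ∧ ω ∈ E}, hpre, two_mul]

lemma sum_prE_mul (h : Ω → A) (φ : A → ℝ) :
    ∑ a, prE p {ω | h ω = a} * φ a = ∑ ω, p ω * φ (h ω) := by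
  rw [← sum_fiberwise univ h]
  refine sum_congr rfl fun a _ => ?_
  simp only [prE, Set.mem_ofPred_eq, sum_mul]
  exact sum_congr rfl fun ω hω => by rw [(mem_filter.1 hω).2]

lemma condEnt_eq_sum_mul_neg_logb (f : Ω → A) (g : Ω → B) :
    condEnt p f g = ∑ ω, p ω *
      -Real.logb 2 (prE p {ω' | f ω' = f ω ∧ g ω' = g ω} / prE p {ω' | g ω' = g ω}) := by
  have h := sum_prE_mul (p := p) (fun ω => (f ω, g ω)) fun c =>
    -Real.logb 2 (prE p {ω | f ω = c.1 ∧ g ω = c.2} / prE p {ω | g ω = c.2})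
  rw [← h, Fintype.sum_prod_type]
  simp only [condEnt, Prod.mk.injEq, mul_neg, sum_neg_distrib]

/-- A bit that is either determined by the observation or balanced by a symmetry contributes `0`
or `1` to the conditional entropy, which is then the probability of being undetermined. -/
lemma condEnt_eq_prE (hp : ∀ ω, 0 ≤ p ω) (f : Ω → ZMod 2) (g : Ω → B)
    (hsymm : ∀ ω ω', g ω' = g ω → f ω' ≠ f ω → ∃ σ : Equiv.Perm Ω, (∀ x, p (σ x) = p x) ∧
      (∀ x, g (σ x) = g ω ↔ g x = g ω) ∧ ∀ x, f (σ x) = f x + 1) :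
    condEnt p f g = prE p {ω | ∃ ω', g ω' = g ω ∧ f ω' ≠ f ω} := by
  rw [condEnt_eq_sum_mul_neg_logb, prE, sum_filter]
  refine sum_congr rfl fun ω _ => ?_
  rcases (hp ω).eq_or_lt with hω | hω
  · simp [← hω]
  have hfibre : prE p {ω' | g ω' = g ω} ≠ 0 :=
    (prE_pos_of_mem (E := {ω' | g ω' = g ω}) hp rfl hω).ne'
  split_ifs with hund
  · obtain ⟨ω', hg, hf⟩ := hund
    obtain ⟨σ, hσp, hσg, hσf⟩ := hsymm ω ω' hg hf
    have hhalf : prE p {ω' | g ω' = g ω} = 2 * prE p {ω' | f ω' = f ω ∧ g ω' = g ω} :=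
      prE_eq_two_mul_of_perm_flips f hσp hσg (fun x _ => hσf x) (f ω)
    have hratio : prE p {ω' | f ω' = f ω ∧ g ω' = g ω} / prE p {ω' | g ω' = g ω} = 2⁻¹ := by
      rw [div_eq_iff hfibre, hhalf, inv_mul_cancel_left₀ two_ne_zero]
    rw [hratio, Real.logb_inv, Real.logb_self_eq_one one_lt_two, neg_neg, mul_one]
  · have hdet : {ω' | f ω' = f ω ∧ g ω' = g ω} = {ω' | g ω' = g ω} :=
      Set.ext fun ω' => and_iff_right_of_imp fun hg => by_contra fun hf => hund ⟨ω', hg, hf⟩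
    rw [hdet, div_self hfibre, Real.logb_one, neg_zero, mul_zero]

end Entropy

section BernoulliMeasure

variable {ι κ : Type*} [Fintype ι] [Fintype κ]

/-- The probability of the bit `b` under the Bernoulli(`ε`) distribution. -/
def bitWeight (ε : ℝ) (b : ZMod 2) : ℝ := if b = 1 then ε else 1 - ε

/-- The probability of the pattern `z` when its bits are i.i.d. Bernoulli(`ε`). -/
def bernoulliWeight (ε : ℝ) (z : ι → ZMod 2) : ℝ := ∏ k, bitWeight ε (z k)

variable {ε : ℝ}

@[simp] lemma bitWeight_zero : bitWeight ε 0 = 1 - ε := by simp [bitWeight]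

@[simp] lemma bitWeight_one : bitWeight ε 1 = ε := by simp [bitWeight]

lemma bitWeight_nonneg (hε : ε ∈ Set.Icc 0 1) (b : ZMod 2) : 0 ≤ bitWeight ε b := by
  unfold bitWeight
  split_ifs
  exacts [hε.1, sub_nonneg.2 hε.2]

lemma bernoulliWeight_nonneg (hε : ε ∈ Set.Icc 0 1) (z : ι → ZMod 2) : 0 ≤ bernoulliWeight ε z :=
  prod_nonneg fun k _ => bitWeight_nonneg hε (z k)

variable [DecidableEq ι] [DecidableEq κ]

/-- The expectation of `f` at a random pattern of i.i.d. Bernoulli(`ε`) bits. -/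
def bernoulliExp (ε : ℝ) (f : (ι → ZMod 2) → ℝ) : ℝ := ∑ z, bernoulliWeight ε z * f z

/-- The probability that a random pattern of i.i.d. Bernoulli(`ε`) bits lies in `A`. -/
def bernoulliProb (ε : ℝ) (A : Set (ι → ZMod 2)) : ℝ := bernoulliExp ε (A.indicator 1)

lemma bernoulliWeight_update (z : ι → ZMod 2) (j : ι) (b : ZMod 2) :
    bernoulliWeight ε (Function.update z j b) =
      bitWeight ε b * ∏ k ∈ univ.erase j, bitWeight ε (z k) := by
  rw [bernoulliWeight, ← mul_prod_erase _ _ (mem_univ j), Function.update_self]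
  congr 1
  exact prod_congr rfl fun k hk => by rw [Function.update_of_ne (ne_of_mem_erase hk)]

lemma sum_bernoulliWeight : ∑ z : ι → ZMod 2, bernoulliWeight ε z = 1 := by
  have hbit : ∑ b, bitWeight ε b = 1 := by rw [sum_bit]; simp
  have h := prod_univ_sum (fun _ : ι => (univ : Finset (ZMod 2))) fun _ => bitWeight ε
  simpa [bernoulliWeight, hbit, Fintype.piFinset_univ] using h.symm

lemma bernoulliExp_sub (f g : (ι → ZMod 2) → ℝ) :
    bernoulliExp ε (fun z => f z - g z) = bernoulliExp ε f - bernoulliExp ε g := by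
  simp only [bernoulliExp, mul_sub, sum_sub_distrib]

lemma bernoulliExp_const_mul (c : ℝ) (f : (ι → ZMod 2) → ℝ) :
    bernoulliExp ε (fun z => c * f z) = c * bernoulliExp ε f := by
  simp only [bernoulliExp, mul_sum, mul_left_comm]

lemma bernoulliExp_nonneg (hε : ε ∈ Set.Icc 0 1) {f : (ι → ZMod 2) → ℝ} (hf : ∀ z, 0 ≤ f z) :
    0 ≤ bernoulliExp ε f :=
  sum_nonneg fun z _ => mul_nonneg (bernoulliWeight_nonneg hε z) (hf z)

lemma bernoulliExp_mono (hε : ε ∈ Set.Icc 0 1) {f g : (ι → ZMod 2) → ℝ} (hfg : ∀ z, f z ≤ g z) :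
    bernoulliExp ε f ≤ bernoulliExp ε g :=
  sum_le_sum fun z _ => mul_le_mul_of_nonneg_left (hfg z) (bernoulliWeight_nonneg hε z)

lemma bernoulliExp_mem_Icc (hε : ε ∈ Set.Icc 0 1) {f : (ι → ZMod 2) → ℝ} {a b : ℝ}
    (hf : ∀ z, f z ∈ Set.Icc a b) : bernoulliExp ε f ∈ Set.Icc a b :=
  (convex_Icc a b).sum_mem (fun z _ => bernoulliWeight_nonneg hε z) sum_bernoulliWeight
    fun z _ => hf z

lemma bernoulliExp_comp_equiv (e : ι ≃ κ) (f : (ι → ZMod 2) → ℝ) :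
    bernoulliExp ε (fun z => f (z ∘ e)) = bernoulliExp ε f := by
  unfold bernoulliExp
  rw [← Equiv.sum_comp (e.arrowCongr (Equiv.refl (ZMod 2)))]
  refine sum_congr rfl fun z _ => ?_
  simp [bernoulliWeight, Equiv.arrowCongr, Function.comp_assoc,
    Equiv.prod_comp e.symm fun k => bitWeight ε (z k)]

lemma bernoulliProb_nonneg (hε : ε ∈ Set.Icc 0 1) (A : Set (ι → ZMod 2)) :
    0 ≤ bernoulliProb ε A :=
  bernoulliExp_nonneg hε <| Set.indicator_nonneg fun _ _ => zero_le_one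

lemma bernoulliProb_mono (hε : ε ∈ Set.Icc 0 1) {A B : Set (ι → ZMod 2)} (hAB : A ⊆ B) :
    bernoulliProb ε A ≤ bernoulliProb ε B :=
  bernoulliExp_mono hε <| Set.indicator_le_indicator_of_subset hAB fun _ => zero_le_one

lemma bernoulliProb_diff {A B : Set (ι → ZMod 2)} (hAB : A ⊆ B) :
    bernoulliProb ε (B \ A) = bernoulliProb ε B - bernoulliProb ε A := by
  unfold bernoulliProb
  rw [Set.indicator_sdiff hAB, ← bernoulliExp_sub]
  rfl

lemma card_smul_sum_eq_sum_update {α M : Type*} [AddGroup α] [Fintype α] [AddCommMonoid M]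
    (j : ι) (F : (ι → α) → M) :
    Fintype.card α • ∑ z, F z = ∑ z, ∑ b, F (Function.update z j b) := by
  have hupdate (z : ι → α) (b : α) :
      Function.update z j (z j + b) = Equiv.addRight (Pi.single j b) z := by
    ext k
    rcases eq_or_ne k j with rfl | hk <;> simp [*]
  calc Fintype.card α • ∑ z, F z
      = ∑ b, ∑ z, F (Equiv.addRight (Pi.single j b) z) := by
        simp only [Equiv.sum_comp, sum_const, card_univ]
    _ = ∑ z, ∑ b, F (Function.update z j (z j + b)) := by
        simp only [hupdate]
        exact sum_comm
    _ = ∑ z, ∑ b, F (Function.update z j b) :=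
        sum_congr rfl fun z _ => Equiv.sum_comp (Equiv.addLeft (z j)) fun b =>
          F (Function.update z j b)

lemma two_mul_sum_eq_sum_update (j : ι) (F : (ι → ZMod 2) → ℝ) :
    2 * ∑ z, F z = ∑ z, (F (Function.update z j 0) + F (Function.update z j 1)) := by
  simpa [sum_bit] using card_smul_sum_eq_sum_update j F

/-- Russo's formula for not necessarily monotone functions. -/
lemma hasDerivAt_bernoulliExp (f : (ι → ZMod 2) → ℝ) (ε : ℝ) :
    HasDerivAt (fun e => bernoulliExp e f)
      (∑ j, bernoulliExp ε fun z => f (Function.update z j 1) - f (Function.update z j 0)) ε := by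
  have hbit (b : ZMod 2) : HasDerivAt (bitWeight · b) (if b = 1 then 1 else -1) ε := by
    rcases eq_or_ne b 1 with rfl | hb
    · simpa using hasDerivAt_id' ε
    · simpa [bit_ne_one_iff.1 hb] using (hasDerivAt_id ε).const_sub 1
  have hsum : HasDerivAt (fun e => bernoulliExp e f)
      (∑ z : ι → ZMod 2, (∑ j, (∏ k ∈ univ.erase j, bitWeight ε (z k)) •
        (if z j = 1 then (1 : ℝ) else -1)) * f z) ε :=
    HasDerivAt.fun_sum fun z _ =>
      (HasDerivAt.fun_finsetProd fun k _ => hbit (z k)).mul_const (f z)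
  convert hsum using 1
  simp only [sum_mul]
  rw [sum_comm]
  refine sum_congr rfl fun j _ => mul_left_cancel₀ (two_ne_zero' ℝ) ?_
  rw [bernoulliExp, two_mul_sum_eq_sum_update j, two_mul_sum_eq_sum_update j]
  refine sum_congr rfl fun z _ => ?_
  have hoff (b : ZMod 2) : ∏ k ∈ univ.erase j, bitWeight ε (Function.update z j b k) =
      ∏ k ∈ univ.erase j, bitWeight ε (z k) :=
    prod_congr rfl fun k hk => by rw [Function.update_of_ne (ne_of_mem_erase hk)]
  simp only [bernoulliWeight_update, hoff, Function.update_idem, Function.update_self,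
    bitWeight_zero, bitWeight_one, smul_eq_mul, zero_ne_one, if_true, if_false]
  ring

lemma hasDerivAt_bernoulliProb (A : Set (ι → ZMod 2)) (ε : ℝ) :
    HasDerivAt (fun e => bernoulliProb e A)
      (∑ j, (bernoulliProb ε ((Function.update · j 1) ⁻¹' A) -
        bernoulliProb ε ((Function.update · j 0) ⁻¹' A))) ε := by
  simp only [bernoulliProb, ← bernoulliExp_sub]
  exact hasDerivAt_bernoulliExp (A.indicator 1) ε

end BernoulliMeasure

section Isoperimetry

/-- The isoperimetric profile of the cube: it plays the part that the Gaussian isoperimetric profile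
plays in Bobkov's inequality. -/
def isoProfile (x : ℝ) : ℝ := x * (1 - x)

lemma isoProfile_nonneg {x : ℝ} (hx : x ∈ Set.Icc 0 1) : 0 ≤ isoProfile x :=
  mul_nonneg hx.1 (sub_nonneg.2 hx.2)

lemma isoProfile_convexCombination_eq (p a b : ℝ) :
    isoProfile ((1 - p) * a + p * b) =
      (1 - p) * isoProfile a + p * isoProfile b + (1 - p) * p * (a - b) ^ 2 := by
  unfold isoProfile
  ring

lemma isoProfile_add_sq_le_sqrt (a : ℝ) {d : ℝ} (hd : d ^ 2 ≤ 1) :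
    isoProfile a + d ^ 2 ≤ √(isoProfile a ^ 2 + (2 * d) ^ 2) := by
  have hJ : isoProfile a ≤ 1 / 4 := by unfold isoProfile; nlinarith [sq_nonneg (a - 1 / 2)]
  refine Real.le_sqrt_of_sq_le ?_
  nlinarith [mul_le_mul_of_nonneg_right hJ (sq_nonneg d),
    mul_le_mul_of_nonneg_right hd (sq_nonneg d)]

lemma posPart_sub_sq_add_posPart_sub_sq (a b : ℝ) : (a - b)⁺ ^ 2 + (b - a)⁺ ^ 2 = (a - b) ^ 2 := by
  rcases le_total a b with h | h
  · rw [posPart_of_nonpos (sub_nonpos.2 h), posPart_of_nonneg (sub_nonneg.2 h)]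
    ring
  · rw [posPart_of_nonneg (sub_nonneg.2 h), posPart_of_nonpos (sub_nonpos.2 h)]
    ring

lemma isoProfile_convexCombination_le {p a b : ℝ} (hp : p ∈ Set.Icc 0 1) (ha : a ∈ Set.Icc 0 1)
    (hb : b ∈ Set.Icc 0 1) :
    isoProfile ((1 - p) * a + p * b) ≤
      (1 - p) * √(isoProfile a ^ 2 + (2 * (a - b)⁺) ^ 2) +
        p * √(isoProfile b ^ 2 + (2 * (b - a)⁺) ^ 2) := by
  have hq : 0 ≤ 1 - p := sub_nonneg.2 hp.2
  have hsplit := posPart_sub_sq_add_posPart_sub_sq a b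
  have hle : (a - b) ^ 2 ≤ 1 := by
    rw [sq_le_one_iff_abs_le_one, abs_le]
    constructor <;> linarith [ha.1, ha.2, hb.1, hb.2]
  have hab : (a - b)⁺ ^ 2 ≤ 1 := by linarith [sq_nonneg (b - a)⁺]
  have hba : (b - a)⁺ ^ 2 ≤ 1 := by linarith [sq_nonneg (a - b)⁺]
  calc isoProfile ((1 - p) * a + p * b)
      = (1 - p) * isoProfile a + p * isoProfile b +
          (1 - p) * p * ((a - b)⁺ ^ 2 + (b - a)⁺ ^ 2) := by
        rw [hsplit, isoProfile_convexCombination_eq]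
    _ ≤ (1 - p) * (isoProfile a + (a - b)⁺ ^ 2) + p * (isoProfile b + (b - a)⁺ ^ 2) := by
        nlinarith [mul_nonneg (sq_nonneg (1 - p)) (sq_nonneg (a - b)⁺),
          mul_nonneg (sq_nonneg p) (sq_nonneg (b - a)⁺)]
    _ ≤ _ :=
        add_le_add (mul_le_mul_of_nonneg_left (isoProfile_add_sq_le_sqrt a hab) hq)
          (mul_le_mul_of_nonneg_left (isoProfile_add_sq_le_sqrt b hba) hp.1)

lemma sqrt_sq_sum_add_sq_sum_le {α : Type*} (s : Finset α) (u v : α → ℝ) :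
    √((∑ x ∈ s, u x) ^ 2 + (∑ x ∈ s, v x) ^ 2) ≤ ∑ x ∈ s, √(u x ^ 2 + v x ^ 2) := by
  have h := norm_sum_le s fun x => (u x + v x * Complex.I : ℂ)
  simp only [sum_add_distrib, ← sum_mul] at h
  simpa only [← Complex.ofReal_sum, Complex.norm_add_mul_I] using h

variable {ι : Type*} [Fintype ι] [DecidableEq ι] {ε : ℝ}

lemma sqrt_sq_bernoulliExp_add_sq_bernoulliExp_le (hε : ε ∈ Set.Icc 0 1)
    (u v : (ι → ZMod 2) → ℝ) :
    √(bernoulliExp ε u ^ 2 + bernoulliExp ε v ^ 2) ≤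
      bernoulliExp ε fun z => √(u z ^ 2 + v z ^ 2) := by
  refine (sqrt_sq_sum_add_sq_sum_le _ _ _).trans_eq (sum_congr rfl fun z _ => ?_)
  rw [mul_pow, mul_pow, ← mul_add, Real.sqrt_mul (sq_nonneg _),
    Real.sqrt_sq (bernoulliWeight_nonneg hε z)]

lemma posPart_bernoulliExp_sub_le (hε : ε ∈ Set.Icc 0 1) (f g : (ι → ZMod 2) → ℝ) :
    (bernoulliExp ε f - bernoulliExp ε g)⁺ ≤ bernoulliExp ε fun z => (f z - g z)⁺ := by
  rw [← bernoulliExp_sub]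
  exact sup_le (bernoulliExp_mono hε fun z => le_posPart _)
    (bernoulliExp_nonneg hε fun z => posPart_nonneg _)

/-- A one-sided squared gradient: only the coordinate flips that decrease `f` count. The factor `2`
is large enough for the two-point inequality `isoProfile_convexCombination_le`. -/
def sqDescent (f : (ι → ZMod 2) → ℝ) (z : ι → ZMod 2) : ℝ :=
  ∑ i, (2 * (f z - f (Function.update z i (z i + 1)))⁺) ^ 2

lemma sqDescent_nonneg (f : (ι → ZMod 2) → ℝ) (z : ι → ZMod 2) : 0 ≤ sqDescent f z :=
  sum_nonneg fun _ _ => sq_nonneg _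

lemma bernoulliExp_cons {n : ℕ} (f : (Fin (n + 1) → ZMod 2) → ℝ) :
    bernoulliExp ε f = (1 - ε) * bernoulliExp ε (fun y => f (Fin.cons 0 y)) +
      ε * bernoulliExp ε fun y => f (Fin.cons 1 y) := by
  unfold bernoulliExp
  rw [← Equiv.sum_comp (Fin.consEquiv fun _ => ZMod 2), Fintype.sum_prod_type, sum_bit]
  simp [bernoulliWeight, Fin.prod_univ_succ, Fin.consEquiv, mul_sum, mul_assoc]

lemma sqDescent_cons {n : ℕ} (f : (Fin (n + 1) → ZMod 2) → ℝ) (b : ZMod 2) (y : Fin n → ZMod 2) :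
    sqDescent f (Fin.cons b y) =
      (2 * (f (Fin.cons b y) - f (Fin.cons (b + 1) y))⁺) ^ 2 +
        sqDescent (fun y => f (Fin.cons b y)) y := by
  simp [sqDescent, Fin.sum_univ_succ, Fin.cons_update]

/-- The estimate for one of the two halves of the cube in the induction on the dimension. -/
lemma sqrt_isoProfile_bernoulliExp_le (hε : ε ∈ Set.Icc 0 1) {f : (ι → ZMod 2) → ℝ}
    (g : (ι → ZMod 2) → ℝ) (hf : ∀ z, f z ∈ Set.Icc 0 1)
    (hiso : isoProfile (bernoulliExp ε f) ≤
      bernoulliExp ε fun z => √(isoProfile (f z) ^ 2 + sqDescent f z)) :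
    √(isoProfile (bernoulliExp ε f) ^ 2 + (2 * (bernoulliExp ε f - bernoulliExp ε g)⁺) ^ 2) ≤
      bernoulliExp ε fun z =>
        √(isoProfile (f z) ^ 2 + ((2 * (f z - g z)⁺) ^ 2 + sqDescent f z)) := by
  have hJ := isoProfile_nonneg (bernoulliExp_mem_Icc hε hf)
  calc √(isoProfile (bernoulliExp ε f) ^ 2 + (2 * (bernoulliExp ε f - bernoulliExp ε g)⁺) ^ 2)
      ≤ √((bernoulliExp ε fun z => √(isoProfile (f z) ^ 2 + sqDescent f z)) ^ 2 +
          (bernoulliExp ε fun z => 2 * (f z - g z)⁺) ^ 2) := by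
        rw [bernoulliExp_const_mul]
        gcongr
        exact posPart_bernoulliExp_sub_le hε f g
    _ ≤ bernoulliExp ε fun z =>
          √(√(isoProfile (f z) ^ 2 + sqDescent f z) ^ 2 + (2 * (f z - g z)⁺) ^ 2) :=
        sqrt_sq_bernoulliExp_add_sq_bernoulliExp_le hε _ _
    _ = _ := by
        congr! 3 with z
        rw [Real.sq_sqrt (add_nonneg (sq_nonneg _) (sqDescent_nonneg f z))]
        ring

lemma isoProfile_bernoulliExp_le_of_fin (hε : ε ∈ Set.Icc 0 1) {n : ℕ}
    {f : (Fin n → ZMod 2) → ℝ} (hf : ∀ z, f z ∈ Set.Icc 0 1) :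
    isoProfile (bernoulliExp ε f) ≤
      bernoulliExp ε fun z => √(isoProfile (f z) ^ 2 + sqDescent f z) := by
  induction n with
  | zero =>
    have hJ (x : ℝ) : x ≤ √(x ^ 2) := Real.le_sqrt_of_sq_le le_rfl
    simp [bernoulliExp, bernoulliWeight, sqDescent, hJ]
  | succ n ih =>
    have hhalf (b : ZMod 2) := sqrt_isoProfile_bernoulliExp_le hε (fun y => f (Fin.cons (b + 1) y))
      (fun y => hf (Fin.cons b y)) (ih fun y => hf (Fin.cons b y))
    have hmem (b : ZMod 2) := bernoulliExp_mem_Icc hε fun y => hf (Fin.cons b y)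
    rw [bernoulliExp_cons f]
    refine (isoProfile_convexCombination_le hε (hmem 0) (hmem 1)).trans ?_
    rw [bernoulliExp_cons]
    simp only [sqDescent_cons]
    exact add_le_add (mul_le_mul_of_nonneg_left (hhalf 0) (sub_nonneg.2 hε.2))
      (mul_le_mul_of_nonneg_left (hhalf 1) hε.1)

lemma sqDescent_comp_equiv {κ : Type*} [Fintype κ] [DecidableEq κ] (e : ι ≃ κ)
    (f : (ι → ZMod 2) → ℝ) (z : κ → ZMod 2) :
    sqDescent (fun y => f (y ∘ e)) z = sqDescent f (z ∘ e) := by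
  unfold sqDescent
  rw [← Equiv.sum_comp e]
  simp [Function.update_comp_equiv]

/-- A Bobkov-type functional isoperimetric inequality on the biased cube. -/
lemma isoProfile_bernoulliExp_le (hε : ε ∈ Set.Icc 0 1) {f : (ι → ZMod 2) → ℝ}
    (hf : ∀ z, f z ∈ Set.Icc 0 1) :
    isoProfile (bernoulliExp ε f) ≤
      bernoulliExp ε fun z => √(isoProfile (f z) ^ 2 + sqDescent f z) := by
  have h := isoProfile_bernoulliExp_le_of_fin hε fun z => hf (z ∘ Fintype.equivFin ι)
  simp only [sqDescent_comp_equiv] at h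
  rwa [bernoulliExp_comp_equiv,
    bernoulliExp_comp_equiv _ fun z => √(isoProfile (f z) ^ 2 + sqDescent f z)] at h

/-- The patterns of `A` from which a single coordinate flip leaves `A`. -/
def innerBoundary (A : Set (ι → ZMod 2)) : Set (ι → ZMod 2) :=
  {z ∈ A | ∃ i, Function.update z i (z i + 1) ∉ A}

lemma sqDescent_indicator_le (A : Set (ι → ZMod 2)) (z : ι → ZMod 2) :
    sqDescent (A.indicator 1) z ≤ 4 * Fintype.card ι * (innerBoundary A).indicator 1 z := by
  by_cases hz : z ∈ innerBoundary A
  · have hterm (i : ι) :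
        (2 * (A.indicator 1 z - A.indicator 1 (Function.update z i (z i + 1)))⁺) ^ 2 ≤ (4 : ℝ) := by
      by_cases hi : Function.update z i (z i + 1) ∈ A <;> norm_num [hz.1, hi]
    calc sqDescent (A.indicator 1) z ≤ ∑ _i : ι, (4 : ℝ) := sum_le_sum fun i _ => hterm i
      _ = _ := by simp [hz, mul_comm]
  · rw [Set.indicator_of_notMem hz, mul_zero]
    refine (sum_eq_zero fun i _ => ?_).le
    by_cases hzA : z ∈ A
    · have hi : Function.update z i (z i + 1) ∈ A := by_contra fun hi => hz ⟨hzA, i, hi⟩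
      simp [hzA, hi]
    · by_cases hi : Function.update z i (z i + 1) ∈ A <;> simp [hzA, hi]

lemma isoProfile_bernoulliProb_le (hε : ε ∈ Set.Icc 0 1) (A : Set (ι → ZMod 2)) :
    isoProfile (bernoulliProb ε A) ≤
      2 * √(Fintype.card ι) * bernoulliProb ε (innerBoundary A) := by
  have hmem (z : ι → ZMod 2) : (A.indicator 1 z : ℝ) ∈ Set.Icc 0 1 := by
    by_cases hz : z ∈ A <;> simp [hz]
  refine (isoProfile_bernoulliExp_le hε hmem).trans ?_
  rw [bernoulliProb, ← bernoulliExp_const_mul]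
  refine bernoulliExp_mono hε fun z => Real.sqrt_le_iff.2 ⟨?_, ?_⟩
  · exact mul_nonneg (by positivity) (Set.indicator_nonneg (fun _ _ => zero_le_one) z)
  · have hJ : isoProfile (A.indicator 1 z) = 0 := by by_cases hz : z ∈ A <;> simp [isoProfile, hz]
    have hsq : ((innerBoundary A).indicator 1 z : ℝ) ^ 2 = (innerBoundary A).indicator 1 z := by
      by_cases hz : z ∈ innerBoundary A <;> simp [hz]
    rw [hJ, mul_pow, hsq, mul_pow, Real.sq_sqrt (Nat.cast_nonneg _)]
    linarith [sqDescent_indicator_le A z]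

lemma bernoulliProb_separator_ge [Nonempty ι] (hε : ε ∈ Set.Icc 0 1) {A S : Set (ι → ZMod 2)}
    {δ : ℝ} (hδ : 0 < δ) (hS : innerBoundary A ⊆ S) (hA : δ < bernoulliProb ε A)
    (hAS : bernoulliProb ε (A \ S) < 1 - δ) :
    δ ^ 2 / 4 ≤ √(Fintype.card ι) * bernoulliProb ε S := by
  have hcard : 1 ≤ √(Fintype.card ι) :=
    Real.one_le_sqrt.2 (by exact_mod_cast Fintype.card_pos)
  have hiso : isoProfile (bernoulliProb ε A) ≤ 2 * √(Fintype.card ι) * bernoulliProb ε S :=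
    (isoProfile_bernoulliProb_le hε A).trans <|
      mul_le_mul_of_nonneg_left (bernoulliProb_mono hε hS) (by positivity)
  have hsplit : bernoulliProb ε A ≤ bernoulliProb ε (A \ S) + bernoulliProb ε S := by
    have hdiff := bernoulliProb_diff (ε := ε) (Set.inter_subset_left : A ∩ S ⊆ A)
    rw [Set.sdiff_self_inter] at hdiff
    linarith [bernoulliProb_mono hε (Set.inter_subset_right : A ∩ S ⊆ S)]
  rcases le_total (δ / 2) (bernoulliProb ε S) with hlarge | hsmall
  · have hδ1 : δ < 1 := by linarith [bernoulliProb_nonneg hε (A \ S)]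
    nlinarith
  · unfold isoProfile at hiso
    nlinarith

end Isoperimetry

section ForcedCoordinates

lemma sum_prod_insert_mul_update_one {ι : Type*} [Fintype ι] [DecidableEq ι] (ε : ℝ) {j : ι}
    {s : Finset ι} (hj : j ∉ s) (f : (ι → ZMod 2) → ℝ) :
    ∑ z : ι → ZMod 2, (∏ k ∈ insert j s, bitWeight ε (z k)) * f (Function.update z j 1) =
      ∑ z : ι → ZMod 2, if z j = 1 then (∏ k ∈ s, bitWeight ε (z k)) * f z else 0 := by
  have hoff (z : ι → ZMod 2) (b : ZMod 2) :
      ∏ k ∈ s, bitWeight ε (Function.update z j b k) = ∏ k ∈ s, bitWeight ε (z k) :=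
    prod_congr rfl fun k hk => by rw [Function.update_of_ne (ne_of_mem_of_not_mem hk hj)]
  refine mul_left_cancel₀ (two_ne_zero' ℝ) ?_
  rw [two_mul_sum_eq_sum_update j, two_mul_sum_eq_sum_update j]
  refine sum_congr rfl fun z _ => ?_
  simp only [prod_insert hj, hoff, Function.update_idem, Function.update_self, bitWeight_zero,
    bitWeight_one, zero_ne_one, if_true, if_false]
  ring

variable {n : ℕ}

/-- The pattern `z` with coordinates `i` and `j` overwritten by `1`: this turns an i.i.d. pattern
into the random pattern `Z^ε(ij)`. -/
def forceOnes (i j : Fin n) (z : Pattern n) : Pattern n :=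
  Function.update (Function.update z j 1) i 1

lemma prod_bitWeight_erase_erase (ε : ℝ) (i j : Fin n) (z : Pattern n) :
    ∏ k ∈ (univ.erase j).erase i, bitWeight ε (z k) =
      ε ^ #{k | k ≠ i ∧ k ≠ j ∧ z k = 1} * (1 - ε) ^ #{k | k ≠ i ∧ k ≠ j ∧ z k = 0} := by
  simp only [bitWeight, prod_ite, prod_const]
  congr 3 <;> ext k <;> simp [and_assoc, bit_ne_one_iff]

lemma probZ_eq_bernoulliProb (ε : ℝ) {i j : Fin n} (hij : i ≠ j) (B : Set (Pattern n)) :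
    probZ ε i j B = bernoulliProb ε (forceOnes i j ⁻¹' B) := by
  symm
  calc bernoulliProb ε (forceOnes i j ⁻¹' B)
      = ∑ z : Pattern n, (∏ k ∈ insert j (univ.erase j), bitWeight ε (z k)) *
          B.indicator 1 (Function.update (Function.update z j 1) i 1) := by
        rw [insert_erase (mem_univ j)]
        rfl
    _ = ∑ z : Pattern n, (∏ k ∈ insert i ((univ.erase j).erase i), bitWeight ε (z k)) *
          if Function.update z i 1 j = 1 then B.indicator 1 (Function.update z i 1) else 0 := by
        rw [sum_prod_insert_mul_update_one ε (notMem_erase j _) fun z =>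
          B.indicator 1 (Function.update z i 1), insert_erase (by simp [hij])]
        simp only [Function.update_of_ne hij.symm, mul_ite, mul_zero]
    _ = probZ ε i j B := by
        rw [sum_prod_insert_mul_update_one ε (notMem_erase i _) fun z =>
          if z j = 1 then B.indicator 1 z else 0, probZ, sum_filter]
        refine sum_congr rfl fun z _ => ?_
        rw [← prod_bitWeight_erase_erase]
        by_cases hB : z ∈ B <;> simp [hB, ← ite_and]

end ForcedCoordinates

section ErasedBits

variable {n : ℕ} {C : Submodule (ZMod 2) (Pattern n)} {ε : ℝ} {i j : Fin n}

lemma pmfP_eq (ω : Samp n C) : pmfP C ε ω = (Nat.card C : ℝ)⁻¹ * bernoulliWeight ε ω.2 := by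
  have hsupp : wH ω.2 = #{k | ω.2 k = 1} := by
    simp only [wH, hammingNorm, bit_ne_zero_iff]
  have hcompl : n - wH ω.2 = #{k | ω.2 k ≠ 1} := by
    rw [hsupp, tsub_eq_iff_eq_add_of_le (card_finset_fin_le _), add_comm]
    simpa using (card_filter_add_card_filter_not (s := univ) fun k => ω.2 k = 1).symm
  rw [pmfP, hcompl, hsupp, mul_assoc]
  simp only [bernoulliWeight, bitWeight, prod_ite, prod_const]

lemma pmfP_nonneg (hε : ε ∈ Set.Icc 0 1) (ω : Samp n C) : 0 ≤ pmfP C ε ω := by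
  rw [pmfP_eq]
  exact mul_nonneg (by positivity) (bernoulliWeight_nonneg hε _)

lemma prE_pmfP_snd (A : Set (Pattern n)) :
    prE (pmfP C ε) {ω | ω.2 ∈ A} = bernoulliProb ε A := by
  have hcard : (Fintype.card C : ℝ) ≠ 0 := by exact_mod_cast Fintype.card_ne_zero
  simp only [prE, sum_filter, Set.mem_ofPred_eq, pmfP_eq, Fintype.sum_prod_type, sum_const,
    card_univ, nsmul_eq_mul, ← mul_sum, Nat.card_eq_fintype_card]
  rw [mul_left_comm, mul_inv_cancel_left₀ hcard]
  simp [bernoulliProb, bernoulliExp, Set.indicator_apply]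

lemma Yout_apply_eq_iff {ω ω' : Samp n C} {k : Fin n} :
    Yout ω' k = Yout ω k ↔ (ω'.2 k = 1 ↔ ω.2 k = 1) ∧ (ω.2 k ≠ 1 → ω'.1.1 k = ω.1.1 k) := by
  unfold Yout
  by_cases h : ω.2 k = 1 <;> by_cases h' : ω'.2 k = 1 <;> simp [h, h']

lemma Ynot_eq_iff {ω ω' : Samp n C} : Ynot i ω' = Ynot i ω ↔
    ∀ k ≠ i, (ω'.2 k = 1 ↔ ω.2 k = 1) ∧ (ω.2 k ≠ 1 → ω'.1.1 k = ω.1.1 k) := by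
  simp only [funext_iff, Ynot, Subtype.forall, Yout_apply_eq_iff]

lemma Ynot2_eq_iff {ω ω' : Samp n C} : Ynot2 i j ω' = Ynot2 i j ω ↔
    ∀ k, k ≠ i ∧ k ≠ j → (ω'.2 k = 1 ↔ ω.2 k = 1) ∧ (ω.2 k ≠ 1 → ω'.1.1 k = ω.1.1 k) := by
  simp only [funext_iff, Ynot2, Subtype.forall, Yout_apply_eq_iff]

lemma Ynot2_eq_iff_Ynot_update (ω ω' : Samp n C) : Ynot2 i j ω' = Ynot2 i j ω ↔
    Ynot i (ω'.1, Function.update ω'.2 j 1) = Ynot i (ω.1, Function.update ω.2 j 1) := by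
  rw [Ynot2_eq_iff, Ynot_eq_iff]
  refine forall_congr' fun k => ?_
  rcases eq_or_ne k j with rfl | hk <;> simp [*]

lemma prodMk_Ynot2_eq_iff_Ynot_update (hij : i ≠ j) (ω ω' : Samp n C) :
    (ω'.1.1 j, Ynot2 i j ω') = (ω.1.1 j, Ynot2 i j ω) ↔
      Ynot i (ω'.1, Function.update ω'.2 j 0) = Ynot i (ω.1, Function.update ω.2 j 0) := by
  rw [Prod.mk.injEq, Ynot2_eq_iff, Ynot_eq_iff]
  refine ⟨fun h k hki => ?_, fun h => ⟨?_, fun k hk => ?_⟩⟩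
  · rcases eq_or_ne k j with rfl | hkj
    · simp [h.1]
    · simpa [hkj] using h.2 k ⟨hki, hkj⟩
  · simpa using h j hij.symm
  · simpa [hk.2] using h k hk.1

lemma covers_update_one_iff {z c : Pattern n} :
    covers (Function.update z i 1) c ↔ ∀ k ≠ i, z k ≠ 1 → c k = 0 := by
  refine forall_congr' fun k => ?_
  rcases eq_or_ne k i with rfl | hk
  · simp
  · simp only [Function.update_of_ne hk, bit_ne_zero_iff (b := z k), ne_eq, hk, not_false_iff,
      forall_const]
    exact not_imp_comm

lemma covers_update_zero_iff {z c : Pattern n} :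
    covers (Function.update z j 0) c ↔ c j = 0 ∧ covers (Function.update z j 1) c := by
  refine ⟨fun h => ⟨by_contra fun hc => h j hc (by simp), fun k hk => ?_⟩, fun h k hk => ?_⟩
  · rcases eq_or_ne k j with rfl | hkj
    · simp
    · simpa [hkj] using h k hk
  · have hkj : k ≠ j := fun hkj => hk (hkj ▸ h.1)
    simpa [hkj] using h.2 k hk

/-- The erasure patterns for which the bit `X_i` is not determined by the unerased bits other than
the `i`-th: some codeword flips it without being seen. -/
def undeterminedEvent (C : Submodule (ZMod 2) (Pattern n)) (i : Fin n) : Set (Pattern n) :=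
  {z | ∃ c ∈ C, c i = 1 ∧ covers (Function.update z i 1) c}

lemma condEnt_pmfP_eq_bernoulliProb (hε : ε ∈ Set.Icc 0 1) {B : Type*} [Fintype B]
    {g : Samp n C → B} (φ : Pattern n → Pattern n)
    (hg : ∀ ω ω', g ω' = g ω ↔ Ynot i (ω'.1, φ ω'.2) = Ynot i (ω.1, φ ω.2)) :
    condEnt (pmfP C ε) (fun ω => ω.1.1 i) g = bernoulliProb ε (φ ⁻¹' undeterminedEvent C i) := by
  have hunseen (ω : Samp n C) {c : C} (hc : covers (Function.update (φ ω.2) i 1) c.1)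
      (x : Samp n C) : g (x.1 + c, x.2) = g ω ↔ g x = g ω := by
    simp only [hg, Ynot_eq_iff]
    refine forall₂_congr fun k hk => and_congr_right fun _ => imp_congr_right fun hz => ?_
    simp [covers_update_one_iff.1 hc k hk hz]
  have hwitness {ω ω' : Samp n C} (h : g ω' = g ω) (hf : ω'.1.1 i ≠ ω.1.1 i) :
      (ω'.1 - ω.1 : C).1 i = 1 ∧ covers (Function.update (φ ω.2) i 1) (ω'.1 - ω.1 : C).1 :=
    ⟨bit_ne_zero_iff.1 (sub_ne_zero.2 hf), covers_update_one_iff.2 fun k hk hz =>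
      sub_eq_zero.2 ((Ynot_eq_iff.1 ((hg ω ω').1 h) k hk).2 hz)⟩
  rw [condEnt_eq_prE (pmfP_nonneg hε), ← prE_pmfP_snd (C := C)]
  · congr 1
    ext ω
    refine ⟨fun ⟨ω', h, hf⟩ => ⟨_, (ω'.1 - ω.1).2, hwitness h hf⟩, fun ⟨c, hcC, hci, hc⟩ => ?_⟩
    exact ⟨(ω.1 + ⟨c, hcC⟩, ω.2), (hunseen ω (c := ⟨c, hcC⟩) hc ω).2 rfl, by simp [hci]⟩
  · intro ω ω' h hf
    obtain ⟨hci, hc⟩ := hwitness h hf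
    refine ⟨(Equiv.addRight (ω'.1 - ω.1)).prodCongr (Equiv.refl _), fun x => ?_, hunseen ω hc,
      fun x => congrArg (x.1.1 i + ·) hci⟩
    simp only [pmfP_eq]
    rfl

lemma condMI_eq_sub (hε : ε ∈ Set.Icc 0 1) (hij : i ≠ j) :
    condMI (pmfP C ε) (fun ω => ω.1.1 i) (fun ω => ω.1.1 j) (Ynot2 i j) =
      bernoulliProb ε ((Function.update · j 1) ⁻¹' undeterminedEvent C i) -
        bernoulliProb ε ((Function.update · j 0) ⁻¹' undeterminedEvent C i) := by
  rw [condMI, condEnt_pmfP_eq_bernoulliProb hε (Function.update · j 1) Ynot2_eq_iff_Ynot_update,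
    condEnt_pmfP_eq_bernoulliProb hε (Function.update · j 0) (prodMk_Ynot2_eq_iff_Ynot_update hij)]

lemma gEXIT_eq_sum_bernoulliProb (hε : ε ∈ Set.Icc 0 1) :
    gEXIT C ε = (n : ℝ)⁻¹ * ∑ i, bernoulliProb ε (undeterminedEvent C i) := by
  rw [gEXIT]
  congr! 2 with i
  exact condEnt_pmfP_eq_bernoulliProb hε id fun _ _ => Iff.rfl

lemma hasDerivAt_bernoulliProb_undeterminedEvent (C : Submodule (ZMod 2) (Pattern n)) (i : Fin n)
    (hε : ε ∈ Set.Icc 0 1) :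
    HasDerivAt (fun e => bernoulliProb e (undeterminedEvent C i))
      (∑ j ∈ univ.erase i,
        condMI (pmfP C ε) (fun ω => ω.1.1 i) (fun ω => ω.1.1 j) (Ynot2 i j)) ε := by
  have hself (b : ZMod 2) :
      (Function.update · i b) ⁻¹' undeterminedEvent C i = undeterminedEvent C i := by
    ext z
    simp [undeterminedEvent]
  convert hasDerivAt_bernoulliProb (undeterminedEvent C i) ε using 1
  rw [← add_sum_erase _ _ (mem_univ i), hself, hself, sub_self, zero_add]
  exact sum_congr rfl fun j hj => condMI_eq_sub hε (ne_of_mem_erase hj).symm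

lemma hasDerivAt_gEXIT (C : Submodule (ZMod 2) (Pattern n)) (hε : ε ∈ Set.Ioo 0 1) :
    HasDerivAt (gEXIT C) ((n : ℝ)⁻¹ * ∑ i : Fin n, ∑ j ∈ univ.erase i,
      condMI (pmfP C ε) (fun ω => ω.1.1 i) (fun ω => ω.1.1 j) (Ynot2 i j)) ε := by
  have hsum := HasDerivAt.fun_sum fun i (_ : i ∈ univ) =>
    hasDerivAt_bernoulliProb_undeterminedEvent C i (Set.Ioo_subset_Icc_self hε)
  refine (hsum.const_mul (n : ℝ)⁻¹).congr_of_eventuallyEq ?_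
  filter_upwards [Ioo_mem_nhds hε.1 hε.2] with e he
  exact gEXIT_eq_sum_bernoulliProb (Set.Ioo_subset_Icc_self he)

end ErasedBits

section PatternClasses

variable {n : ℕ} {C : Submodule (ZMod 2) (Pattern n)} {ε : ℝ} {i j : Fin n}

lemma covers_add {z c d : Pattern n} (hc : covers z c) (hd : covers z d) : covers z (c + d) :=
  fun k hk => by_contra fun hz => hk <| by
    rw [Pi.add_apply, not_imp_comm.1 (hc k) hz, not_imp_comm.1 (hd k) hz, add_zero]

lemma covers_mono {z z' c : Pattern n} (hz : ∀ k, z k ≠ 0 → z' k ≠ 0) (hc : covers z c) :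
    covers z' c :=
  fun k hk => hz k (hc k hk)

lemma add_mem_Cab {a b a' b' : ZMod 2} {z c d : Pattern n} (hc : c ∈ Cab C i j a b z)
    (hd : d ∈ Cab C i j a' b' z) : c + d ∈ Cab C i j (a + a') (b + b') z :=
  ⟨C.add_mem hc.1 hd.1, congrArg₂ (· + ·) hc.2.1 hd.2.1, congrArg₂ (· + ·) hc.2.2.1 hd.2.2.1,
    covers_add hc.2.2.2 hd.2.2.2⟩

lemma Cab_add_nonempty {a b a' b' : ZMod 2} {z : Pattern n} (h : (Cab C i j a b z).Nonempty)
    (h' : (Cab C i j a' b' z).Nonempty) : (Cab C i j (a + a') (b + b') z).Nonempty :=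
  let ⟨_, hc⟩ := h
  let ⟨_, hd⟩ := h'
  ⟨_, add_mem_Cab hc hd⟩

lemma mem_B4_iff {z : Pattern n} :
    z ∈ B4 C i j ↔ (Cab C i j 1 1 z).Nonempty ∧ ¬(Cab C i j 1 0 z).Nonempty := by
  have h₁₀ (h₀₁ : (Cab C i j 0 1 z).Nonempty) (h₁₁ : (Cab C i j 1 1 z).Nonempty) :
      (Cab C i j 1 0 z).Nonempty := (Cab_add_nonempty h₀₁ h₁₁ :)
  simp only [B4, Set.mem_ofPred_eq, ← Set.nonempty_iff_ne_empty, ← Set.not_nonempty_iff_eq_empty]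
  tauto

lemma mem_B2_union_B3_union_B4_iff {z : Pattern n} :
    z ∈ B2 C i j ∪ B3 C i j ∪ B4 C i j ↔ z ∉ B1 C i j ∧ z ∉ B5 C i j := by
  have h₁₀ (h₀₁ : (Cab C i j 0 1 z).Nonempty) (h₁₁ : (Cab C i j 1 1 z).Nonempty) :
      (Cab C i j 1 0 z).Nonempty := (Cab_add_nonempty h₀₁ h₁₁ :)
  have h₁₁ (h₀₁ : (Cab C i j 0 1 z).Nonempty) (h₁₀ : (Cab C i j 1 0 z).Nonempty) :
      (Cab C i j 1 1 z).Nonempty := (Cab_add_nonempty h₀₁ h₁₀ :)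
  have h₀₁ (h₁₀ : (Cab C i j 1 0 z).Nonempty) (h₁₁ : (Cab C i j 1 1 z).Nonempty) :
      (Cab C i j 0 1 z).Nonempty := (Cab_add_nonempty h₁₀ h₁₁ :)
  simp only [B1, B2, B3, B4, B5, Set.mem_union, Set.mem_ofPred_eq, ← Set.nonempty_iff_ne_empty,
    ← Set.not_nonempty_iff_eq_empty]
  tauto

/-- Two codewords witnessing `z ∈ B5` cannot be destroyed, together with their sum, by one change
of `z`: one of the three vanishes at the changed coordinate. -/
lemma notMem_B1_of_mem_B5 {z z' : Pattern n} {l : Fin n} (hz : z ∈ B5 C i j)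
    (hzz' : ∀ k ≠ l, z k ≠ 0 → z' k ≠ 0) : z' ∉ B1 C i j := by
  have hsurvives {a b : ZMod 2} {c : Pattern n} (hc : c ∈ Cab C i j a b z) (hcl : c l = 0) :
      (Cab C i j a b z').Nonempty :=
    ⟨c, hc.1, hc.2.1, hc.2.2.1, fun k hk =>
      hzz' k (fun hkl => hk (hkl ▸ hcl)) (hc.2.2.2 k hk)⟩
  obtain ⟨c, hc⟩ := Set.nonempty_iff_ne_empty.2 hz.1
  obtain ⟨d, hd⟩ := Set.nonempty_iff_ne_empty.2 hz.2.1
  rintro ⟨h₀₁, h₁₀, h₁₁⟩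
  have hcl : c l = 1 := bit_ne_zero_iff.1 fun h => (hsurvives hc h).ne_empty h₀₁
  have hdl : d l = 1 := bit_ne_zero_iff.1 fun h => (hsurvives hd h).ne_empty h₁₀
  have hsum : (c + d) l = 0 := by
    rw [Pi.add_apply, hcl, hdl, CharTwo.add_self_eq_zero]
  exact (hsurvives (add_mem_Cab hc hd) hsum).ne_empty h₁₁

lemma update_one_mem_undeterminedEvent_iff {z : Pattern n} :
    Function.update z j 1 ∈ undeterminedEvent C i ↔
      (Cab C i j 1 0 (forceOnes i j z)).Nonempty ∨ (Cab C i j 1 1 (forceOnes i j z)).Nonempty := by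
  refine ⟨fun ⟨c, hcC, hci, hc⟩ => ?_, ?_⟩
  · rcases eq_or_ne (c j) 0 with hcj | hcj
    · exact .inl ⟨c, hcC, hci, hcj, hc⟩
    · exact .inr ⟨c, hcC, hci, bit_ne_zero_iff.1 hcj, hc⟩
  · rintro (⟨c, hcC, hci, -, hc⟩ | ⟨c, hcC, hci, -, hc⟩) <;> exact ⟨c, hcC, hci, hc⟩

lemma update_zero_mem_undeterminedEvent_iff (hij : i ≠ j) {z : Pattern n} :
    Function.update z j 0 ∈ undeterminedEvent C i ↔
      (Cab C i j 1 0 (forceOnes i j z)).Nonempty := by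
  refine exists_congr fun c => and_congr_right fun _ => and_congr_right fun _ => ?_
  rw [Function.update_comm hij.symm, covers_update_zero_iff, forceOnes,
    Function.update_comm hij.symm]

lemma condMI_eq_probZ_B4 (hε : ε ∈ Set.Icc 0 1) (hij : i ≠ j) :
    condMI (pmfP C ε) (fun ω => ω.1.1 i) (fun ω => ω.1.1 j) (Ynot2 i j) =
      probZ ε i j (B4 C i j) := by
  have hsub : (Function.update · j 0) ⁻¹' undeterminedEvent C i ⊆
      (Function.update · j 1) ⁻¹' undeterminedEvent C i := fun z hz =>
    update_one_mem_undeterminedEvent_iff.2 (.inl ((update_zero_mem_undeterminedEvent_iff hij).1 hz))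
  rw [condMI_eq_sub hε hij, probZ_eq_bernoulliProb ε hij, ← bernoulliProb_diff hsub]
  congr 1
  ext z
  rw [Set.mem_sdiff, Set.mem_preimage, Set.mem_preimage, Set.mem_preimage,
    update_one_mem_undeterminedEvent_iff, update_zero_mem_undeterminedEvent_iff hij, mem_B4_iff]
  tauto

end PatternClasses

section TransitiveCodes

variable {n : ℕ} {C : Submodule (ZMod 2) (Pattern n)} {δ ε : ℝ} {i j : Fin n}

lemma bernoulliProb_undeterminedEvent_apply_le (hε : ε ∈ Set.Icc 0 1) {π : Equiv.Perm (Fin n)}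
    (hπ : ∀ x ∈ C, x ∘ π ∈ C) (i : Fin n) :
    bernoulliProb ε (undeterminedEvent C (π i)) ≤ bernoulliProb ε (undeterminedEvent C i) := by
  have hsub : undeterminedEvent C (π i) ⊆ (· ∘ π) ⁻¹' undeterminedEvent C i := by
    rintro z ⟨c, hcC, hci, hc⟩
    refine ⟨c ∘ π, hπ c hcC, hci, ?_⟩
    rw [← Function.update_comp_eq_of_injective z π.injective]
    exact fun k => hc (π k)
  refine (bernoulliProb_mono hε hsub).trans_eq ?_
  exact bernoulliExp_comp_equiv π ((undeterminedEvent C i).indicator 1)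

lemma gEXIT_eq_bernoulliProb_of_oneTransitive (hε : ε ∈ Set.Icc 0 1) (hC : OneTransitive C)
    (i : Fin n) : gEXIT C ε = bernoulliProb ε (undeterminedEvent C i) := by
  have hle (k l : Fin n) :
      bernoulliProb ε (undeterminedEvent C l) ≤ bernoulliProb ε (undeterminedEvent C k) := by
    obtain ⟨π, rfl, hπ⟩ := hC k l
    exact bernoulliProb_undeterminedEvent_apply_le hε (fun x => (hπ x).1) k
  have hn : (n : ℝ) ≠ 0 := by exact_mod_cast i.pos.ne'
  rw [gEXIT_eq_sum_bernoulliProb hε, sum_congr rfl fun k _ => (hle i k).antisymm (hle k i),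
    sum_const, card_univ, Fintype.card_fin, nsmul_eq_mul, inv_mul_cancel_left₀ hn]

lemma undeterminedEvent_subset_forceOnes_preimage_compl_B1 :
    undeterminedEvent C i ⊆ forceOnes i j ⁻¹' (B1 C i j)ᶜ := by
  rintro z ⟨c, hcC, hci, hc⟩ hB1
  have hmono : ∀ k, Function.update z i 1 k ≠ 0 → forceOnes i j z k ≠ 0 := fun k hk => by
    rcases eq_or_ne k i with rfl | hki
    · simp [forceOnes]
    rcases eq_or_ne k j with rfl | hkj
    · simp [forceOnes, hki]
    · simpa [forceOnes, hki, hkj] using hk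
  rcases update_one_mem_undeterminedEvent_iff.1 ⟨c, hcC, hci, covers_mono hmono hc⟩ with h | h
  exacts [h.ne_empty hB1.2.1, h.ne_empty hB1.2.2]

lemma forceOnes_preimage_B5_subset_undeterminedEvent :
    forceOnes i j ⁻¹' B5 C i j ⊆ undeterminedEvent C i := by
  rintro z hz
  obtain ⟨c, hcC, hci, hcj, hc⟩ := Set.nonempty_iff_ne_empty.2 hz.2.1
  refine ⟨c, hcC, hci, fun k hk => ?_⟩
  have hkj : k ≠ j := fun hkj => hk (hkj ▸ hcj)
  simpa [forceOnes, Function.update_apply, hkj] using hc k hk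

lemma innerBoundary_forceOnes_preimage_compl_B1_subset :
    innerBoundary (forceOnes i j ⁻¹' (B1 C i j)ᶜ) ⊆
      forceOnes i j ⁻¹' (B2 C i j ∪ B3 C i j ∪ B4 C i j) := by
  rintro z ⟨hz, l, hl⟩
  refine mem_B2_union_B3_union_B4_iff.2 ⟨hz, fun hB5 => hl ?_⟩
  refine notMem_B1_of_mem_B5 (l := l) hB5 fun k hk hzk => ?_
  simpa [forceOnes, Function.update_apply, hk] using hzk

lemma le_probZ_B2_union_B3_union_B4 (hε : ε ∈ Set.Icc 0 1) (hδ : 0 < δ) (hij : i ≠ j)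
    (hi : bernoulliProb ε (undeterminedEvent C i) ∈ Set.Ioo δ (1 - δ)) :
    δ ^ 2 / 4 ≤ √n * probZ ε i j (B2 C i j ∪ B3 C i j ∪ B4 C i j) := by
  have : Nonempty (Fin n) := ⟨i⟩
  have hsdiff : forceOnes i j ⁻¹' (B1 C i j)ᶜ \
      forceOnes i j ⁻¹' (B2 C i j ∪ B3 C i j ∪ B4 C i j) ⊆ undeterminedEvent C i := fun z hz =>
    forceOnes_preimage_B5_subset_undeterminedEvent <|
      by_contra fun hB5 => hz.2 (mem_B2_union_B3_union_B4_iff.2 ⟨hz.1, hB5⟩)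
  have h := bernoulliProb_separator_ge hε hδ innerBoundary_forceOnes_preimage_compl_B1_subset
    (hi.1.trans_le (bernoulliProb_mono hε undeterminedEvent_subset_forceOnes_preimage_compl_B1))
    ((bernoulliProb_mono hε hsdiff).trans_lt hi.2)
  rwa [Fintype.card_fin, ← probZ_eq_bernoulliProb ε hij] at h

lemma mul_alphaIJ_le_condMI (hε : ε ∈ Set.Icc 0 1) (hδ : 0 < δ) (hij : i ≠ j)
    (hi : bernoulliProb ε (undeterminedEvent C i) ∈ Set.Ioo δ (1 - δ)) :
    δ ^ 2 / 4 / √n * alphaIJ C ε i j ≤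
      condMI (pmfP C ε) (fun ω => ω.1.1 i) (fun ω => ω.1.1 j) (Ynot2 i j) := by
  have hbound := le_probZ_B2_union_B3_union_B4 hε hδ hij hi
  have hsqrt : 0 < √(n : ℝ) := Real.sqrt_pos.2 (by exact_mod_cast i.pos)
  have hpos : 0 < probZ ε i j (B2 C i j ∪ B3 C i j ∪ B4 C i j) :=
    pos_of_mul_pos_right (lt_of_lt_of_le (by positivity) hbound) hsqrt.le
  have hB4 : 0 ≤ probZ ε i j (B4 C i j) := by
    rw [probZ_eq_bernoulliProb ε hij]
    exact bernoulliProb_nonneg hε _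
  rw [condMI_eq_probZ_B4 hε hij, alphaIJ, ← mul_div_assoc, div_le_iff₀ hpos, mul_comm]
  exact mul_le_mul_of_nonneg_left ((div_le_iff₀' hsqrt).2 hbound) hB4

lemma deriv_gEXIT_ge (hC : OneTransitive C) (hδ : 0 < δ) (hε : ε ∈ Set.Ioo 0 1)
    (hg : gEXIT C ε ∈ Set.Ioo δ (1 - δ)) :
    deriv (gEXIT C) ε ≥ δ ^ 2 / 4 / (n : ℝ) ^ ((3 : ℝ) / 2) *
      ∑ i : Fin n, ∑ j ∈ univ.erase i, alphaIJ C ε i j := by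
  have hε' := Set.Ioo_subset_Icc_self hε
  have hconst : δ ^ 2 / 4 / (n : ℝ) ^ ((3 : ℝ) / 2) = (n : ℝ)⁻¹ * (δ ^ 2 / 4 / √n) := by
    rw [show (3 : ℝ) / 2 = 1 + 1 / 2 by norm_num, Real.rpow_add' n.cast_nonneg (by norm_num),
      Real.rpow_one, ← Real.sqrt_eq_rpow, div_mul_eq_div_div_swap, div_eq_inv_mul _ (n : ℝ)]
  rw [(hasDerivAt_gEXIT C hε).deriv, hconst, mul_assoc, ge_iff_le]
  simp only [mul_sum (a := δ ^ 2 / 4 / √(n : ℝ))]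
  gcongr with i _ j hj
  refine mul_alphaIJ_le_condMI hε' hδ (ne_of_mem_erase hj).symm ?_
  rwa [← gEXIT_eq_bernoulliProb_of_oneTransitive hε' hC i]

end TransitiveCodes

theorem EXIT_derivative_and_transitive_bound :
    (∀ (n : ℕ) (C : Submodule (ZMod 2) (Pattern n)), ∀ ε ∈ Set.Ioo (0 : ℝ) 1,
      HasDerivAt (gEXIT C)
        ((n : ℝ)⁻¹ * ∑ i : Fin n, ∑ j ∈ univ.erase i,
          condMI (pmfP C ε) (fun ω => ω.1.1 i) (fun ω => ω.1.1 j) (Ynot2 i j)) ε) ∧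
    ∃ c : ℝ → ℝ → ℝ,
      (∀ δ ε : ℝ, δ ∈ Set.Ioo (0 : ℝ) (1 / 2) → ε ∈ Set.Ioo (0 : ℝ) 1 → 0 < c δ ε) ∧
      (∀ δ₀ ε₀ ε₁ : ℝ, 0 < δ₀ → 0 < ε₀ → ε₁ < 1 →
        ∃ m : ℝ, 0 < m ∧
          ∀ δ ε : ℝ, δ₀ ≤ δ → δ < 1 / 2 → ε₀ ≤ ε → ε ≤ ε₁ → m ≤ c δ ε) ∧
      ∀ (n : ℕ) (C : Submodule (ZMod 2) (Pattern n)), OneTransitive C →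
        ∀ δ ε : ℝ, δ ∈ Set.Ioo (0 : ℝ) (1 / 2) → ε ∈ Set.Ioo (0 : ℝ) 1 →
          gEXIT C ε ∈ Set.Ioo δ (1 - δ) →
          deriv (gEXIT C) ε ≥
            c δ ε / (n : ℝ) ^ ((3 : ℝ) / 2) *
              ∑ i : Fin n, ∑ j ∈ univ.erase i, alphaIJ C ε i j := by
  refine ⟨fun n C ε hε => hasDerivAt_gEXIT C hε, fun δ _ => δ ^ 2 / 4, fun δ ε hδ _ => ?_,
    fun δ₀ ε₀ ε₁ hδ₀ _ _ => ⟨δ₀ ^ 2 / 4, by positivity, fun δ ε hδ _ _ _ => ?_⟩,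
    fun n C hC δ ε hδ hε hg => deriv_gEXIT_ge hC hδ.1 hε hg⟩
  · have := hδ.1
    positivity
  · beta_reduce
    gcongr

end
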